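/- Let N ≥ 2 and let i_1 ≤ i_2 ≤ … ≤ i_p be positive integers with i_1 + … + i_p = k. Then the minimal Dirichlet biharmonic eigenvalues over domains of unit volume in ℝ^N satisfy the subadditivity relation (λ_k*)^{N/4} ≤ (λ_{i_1}*)^{N/4} + … + (λ_{i_p}*)^{N/4}. In particular, (λ_{k+1}*)^{N/4} − (λ_k*)^{N/4} ≤ (λ_1*)^{N/4} for every k ≥ 1. -/

import Mathlib

open MeasureTheory Real Filter

noncomputable section

/-- The Laplacian of `u : ℝ^N → ℝ` as the sum of second derivatives along the
standard basis directions. -/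
def lapN {N : ℕ} (u : EuclideanSpace ℝ (Fin N) → ℝ) :
    EuclideanSpace ℝ (Fin N) → ℝ := fun x =>
  ∑ i : Fin N,
    fderiv ℝ (fun y => fderiv ℝ u y (EuclideanSpace.single i 1)) x
      (EuclideanSpace.single i 1)

/-- Admissible test functions on `Ω ⊆ ℝ^N`: smooth, compactly supported in `Ω`. -/
def AdmN {N : ℕ} (Ω : Set (EuclideanSpace ℝ (Fin N)))
    (u : EuclideanSpace ℝ (Fin N) → ℝ) : Prop :=
  ContDiff ℝ (⊤ : ℕ∞) u ∧ HasCompactSupport u ∧ tsupport u ⊆ Ω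

/-- `k`-th Dirichlet eigenvalue of the biharmonic operator on `Ω ⊆ ℝ^N`:
infimum over linearly independent `k`-tuples of admissible functions of the
maximum of the Rayleigh quotient over nonzero linear combinations. -/
def lamkN (N k : ℕ) (Ω : Set (EuclideanSpace ℝ (Fin N))) : ℝ :=
  sInf { μ | ∃ u : Fin k → (EuclideanSpace ℝ (Fin N) → ℝ),
    (∀ i, AdmN Ω (u i)) ∧ LinearIndependent ℝ u ∧
    μ = sSup { r | ∃ c : Fin k → ℝ, c ≠ 0 ∧
      r = (∫ x, (lapN (fun y => ∑ i, c i * u i y) x) ^ 2) /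
          (∫ x, (∑ i, c i * u i x) ^ 2) } }

/-- `λ_k* = inf { λ_k(Ω) : Ω ⊆ ℝ^N open, |Ω| = 1 }`. -/
def lamStar (N k : ℕ) : ℝ :=
  sInf { μ | ∃ Ω : Set (EuclideanSpace ℝ (Fin N)),
    IsOpen Ω ∧ volume Ω = 1 ∧ μ = lamkN N k Ω }

/-- `ω_N`: the Lebesgue measure of the unit ball in `ℝ^N`. -/
def omegaBall (N : ℕ) : ℝ :=
  (volume (Metric.ball (0 : EuclideanSpace ℝ (Fin N)) 1)).toReal

section Laplacian

variable {N : ℕ} {u v : EuclideanSpace ℝ (Fin N) → ℝ} {Ω Ω' : Set (EuclideanSpace ℝ (Fin N))}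

lemma contDiff_fderiv_const_apply (hu : ContDiff ℝ (⊤ : ℕ∞) u) (e : EuclideanSpace ℝ (Fin N)) :
    ContDiff ℝ (⊤ : ℕ∞) (fun y => fderiv ℝ u y e) :=
  (hu.fderiv_right (by simp)).clm_apply contDiff_const

lemma continuous_lapN (hu : ContDiff ℝ (⊤ : ℕ∞) u) : Continuous (lapN u) :=
  continuous_finsetSum _ fun _ _ =>
    (contDiff_fderiv_const_apply (contDiff_fderiv_const_apply hu _) _).continuous

lemma support_lapN_subset : Function.support (lapN u) ⊆ tsupport u := by
  intro x hx
  obtain ⟨i, -, hi⟩ := Finset.exists_ne_zero_of_sum_ne_zero hx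
  refine (tsupport_fderiv_apply_subset ℝ (EuclideanSpace.single i (1 : ℝ))).trans
    (tsupport_fderiv_apply_subset ℝ (EuclideanSpace.single i (1 : ℝ))) ?_
  exact subset_tsupport _ hi

lemma fderiv_sum_mul_apply {ι : Type*} [Fintype ι] {w : ι → EuclideanSpace ℝ (Fin N) → ℝ}
    (hw : ∀ i, ContDiff ℝ (⊤ : ℕ∞) (w i)) (c : ι → ℝ) (e x : EuclideanSpace ℝ (Fin N)) :
    fderiv ℝ (fun y => ∑ i, c i * w i y) x e = ∑ i, c i * fderiv ℝ (w i) x e := by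
  have hd : ∀ i, DifferentiableAt ℝ (w i) x := fun i =>
    (hw i).differentiable (by simp) x
  rw [fderiv_fun_sum fun i _ => (hd i).const_mul (c i)]
  simp [fderiv_const_mul, hd]

lemma lapN_sum_mul {ι : Type*} [Fintype ι] {w : ι → EuclideanSpace ℝ (Fin N) → ℝ}
    (hw : ∀ i, ContDiff ℝ (⊤ : ℕ∞) (w i)) (c : ι → ℝ) :
    lapN (fun y => ∑ i, c i * w i y) = fun x => ∑ i, c i * lapN (w i) x := by
  ext x
  simp only [lapN, fderiv_sum_mul_apply hw,
    fderiv_sum_mul_apply (fun i => contDiff_fderiv_const_apply (hw i) _), Finset.mul_sum]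
  exact Finset.sum_comm

lemma lapN_add (hu : ContDiff ℝ (⊤ : ℕ∞) u) (hv : ContDiff ℝ (⊤ : ℕ∞) v) :
    lapN (u + v) = lapN u + lapN v := by
  have h := lapN_sum_mul (w := ![u, v]) (by simp [Fin.forall_fin_two, hu, hv]) 1
  simp only [Fin.sum_univ_two, Matrix.cons_val_zero, Matrix.cons_val_one, Pi.one_apply,
    one_mul] at h
  exact h

lemma fderiv_comp_homothety_apply (u : EuclideanSpace ℝ (Fin N) → ℝ) (s : ℝ)
    (b e x : EuclideanSpace ℝ (Fin N)) :
    fderiv ℝ (fun y => u (s • y + b)) x e = s * fderiv ℝ u (s • x + b) e := by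
  have h := fderiv_comp_smul (𝕜 := ℝ) (f := fun y => u (y + b)) (x := x) s
  rw [h, fderiv_comp_add_right]
  simp

lemma lapN_comp_homothety (hu : ContDiff ℝ (⊤ : ℕ∞) u) (s : ℝ) (b : EuclideanSpace ℝ (Fin N)) :
    lapN (fun y => u (s • y + b)) = fun x => s ^ 2 * lapN u (s • x + b) := by
  ext x
  simp only [lapN, fderiv_comp_homothety_apply, Finset.mul_sum]
  refine Finset.sum_congr rfl fun i _ => ?_
  rw [fderiv_const_mul]
  · simp only [_root_.smul_apply, smul_eq_mul]
    rw [fderiv_comp_homothety_apply (fun z => fderiv ℝ u z (EuclideanSpace.single i 1))]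
    ring
  · have hd := (contDiff_fderiv_const_apply hu (EuclideanSpace.single i 1)).differentiable
      (by simp)
    fun_prop

lemma AdmN.mono (hu : AdmN Ω u) (h : Ω ⊆ Ω') : AdmN Ω' u :=
  ⟨hu.1, hu.2.1, hu.2.2.trans h⟩

lemma AdmN.hasCompactSupport_lapN (hu : AdmN Ω u) : HasCompactSupport (lapN u) :=
  hu.2.1.mono' support_lapN_subset

lemma AdmN.sum_mul {ι : Type*} [Fintype ι] {w : ι → EuclideanSpace ℝ (Fin N) → ℝ}
    (hw : ∀ i, AdmN Ω (w i)) (c : ι → ℝ) : AdmN Ω (fun y => ∑ i, c i * w i y) := by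
  have hsub : Function.support (fun y => ∑ i, c i * w i y) ⊆ ⋃ i, tsupport (w i) := by
    intro x hx
    obtain ⟨i, -, hi⟩ := Finset.exists_ne_zero_of_sum_ne_zero hx
    exact Set.mem_iUnion.2 ⟨i, subset_tsupport _ (right_ne_zero_of_mul hi)⟩
  have hK : IsCompact (⋃ i, tsupport (w i)) := isCompact_iUnion fun i => (hw i).2.1
  refine ⟨ContDiff.sum fun i _ => contDiff_const.mul (hw i).1,
    HasCompactSupport.intro' hK hK.isClosed fun x hx => ?_, ?_⟩
  · exact Function.notMem_support.1 fun h => hx (hsub h)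
  · exact (closure_minimal hsub hK.isClosed).trans (Set.iUnion_subset fun i => (hw i).2.2)

lemma AdmN.add (hu : AdmN Ω u) (hv : AdmN Ω v) : AdmN Ω (u + v) := by
  have h := AdmN.sum_mul (Ω := Ω) (w := ![u, v]) (by simp [Fin.forall_fin_two, hu, hv]) 1
  simp only [Fin.sum_univ_two, Matrix.cons_val_zero, Matrix.cons_val_one, Pi.one_apply,
    one_mul] at h
  exact h

lemma AdmN.comp_homothety (hu : AdmN Ω u) {s : ℝ} (hs : s ≠ 0) (b : EuclideanSpace ℝ (Fin N)) :
    AdmN ((fun x => s • x + b) ⁻¹' Ω) (fun y => u (s • y + b)) := by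
  let φ : EuclideanSpace ℝ (Fin N) ≃ₜ EuclideanSpace ℝ (Fin N) :=
    (Homeomorph.smulOfNeZero s hs).trans (Homeomorph.addRight b)
  refine ⟨hu.1.comp (by fun_prop), hu.2.1.comp_homeomorph φ, ?_⟩
  have h := tsupport_comp_eq_preimage u φ
  exact h.subset.trans (Set.preimage_mono hu.2.2)

lemma integral_comp_homothety (f : EuclideanSpace ℝ (Fin N) → ℝ) {s : ℝ} (hs : 0 < s)
    (b : EuclideanSpace ℝ (Fin N)) : ∫ x, f (s • x + b) = (s ^ N)⁻¹ * ∫ x, f x := by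
  rw [Measure.integral_comp_smul volume (fun y => f (y + b)) s, integral_add_right_eq_self f b]
  simp [abs_of_pos hs]

lemma volume_preimage_homothety {s : ℝ} (hs : 0 < s) (b : EuclideanSpace ℝ (Fin N)) :
    volume ((fun x => s • x + b) ⁻¹' Ω) = ENNReal.ofReal ((s ^ N)⁻¹) * volume Ω := by
  have h := Measure.addHaar_preimage_smul volume hs.ne' ((fun x => x + b) ⁻¹' Ω)
  rw [measure_preimage_add_right] at h
  simpa [Set.preimage_preimage, abs_of_pos hs] using h

lemma AdmN.integral_sq_pos (hu : AdmN Ω u) (hne : u ≠ 0) : 0 < ∫ x, u x ^ 2 := by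
  obtain ⟨x, hx⟩ := Function.ne_iff.1 hne
  have hc : Continuous fun x => u x ^ 2 := hu.1.continuous.pow 2
  refine hc.integral_pos_of_hasCompactSupport_nonneg_nonzero (x := x)
    (hu.2.1.mono fun y hy => ?_) (fun y => sq_nonneg _) (by simpa using hx)
  simpa using hy

lemma integral_add_sq_of_disjoint {f g : EuclideanSpace ℝ (Fin N) → ℝ} (hf : Continuous f)
    (hfc : HasCompactSupport f) (hg : Continuous g) (hgc : HasCompactSupport g)
    (hfg : ∀ x, f x * g x = 0) :
    ∫ x, (f + g) x ^ 2 = (∫ x, f x ^ 2) + ∫ x, g x ^ 2 := by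
  have key : ∀ h : EuclideanSpace ℝ (Fin N) → ℝ, Continuous h → HasCompactSupport h →
      Integrable (fun x => h x ^ 2) := fun h hh hhc =>
    (hh.pow 2).integrable_of_hasCompactSupport (hhc.mono fun y hy => by simpa using hy)
  rw [← integral_add (key f hf hfc) (key g hg hgc)]
  refine integral_congr_ae (.of_forall fun x => ?_)
  simp only [Pi.add_apply]
  linear_combination 2 * hfg x

end Laplacian

/-- `W` is a `k`-dimensional space of admissible functions on the bounded open set `V` on which
the biharmonic Rayleigh quotient is at most `Λ`. -/
structure IsTrialSpace {N : ℕ} (k : ℕ) (Λ : ℝ) (W : Submodule ℝ (EuclideanSpace ℝ (Fin N) → ℝ))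
    (V : Set (EuclideanSpace ℝ (Fin N))) : Prop where
  finiteDimensional : FiniteDimensional ℝ W
  finrank_eq : Module.finrank ℝ W = k
  isOpen : IsOpen V
  isBounded : Bornology.IsBounded V
  adm : ∀ u ∈ W, AdmN V u
  integral_le : ∀ u ∈ W, ∫ x, lapN u x ^ 2 ≤ Λ * ∫ x, u x ^ 2

namespace IsTrialSpace

variable {N k l : ℕ} {Λ : ℝ} {W W' : Submodule ℝ (EuclideanSpace ℝ (Fin N) → ℝ)}
  {V V' : Set (EuclideanSpace ℝ (Fin N))}

lemma sup (h : IsTrialSpace k Λ W V) (h' : IsTrialSpace l Λ W' V') (hd : Disjoint V V') :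
    IsTrialSpace (k + l) Λ (W ⊔ W') (V ∪ V') where
  finiteDimensional := by
    have := h.finiteDimensional
    have := h'.finiteDimensional
    infer_instance
  finrank_eq := by
    have := h.finiteDimensional
    have := h'.finiteDimensional
    have hinf : W ⊓ W' = ⊥ := by
      refine (Submodule.eq_bot_iff _).2 fun u hu => ?_
      ext x
      by_contra hx
      have hx' : x ∈ tsupport u := subset_tsupport _ hx
      exact Set.disjoint_left.1 hd ((h.adm u hu.1).2.2 hx') ((h'.adm u hu.2).2.2 hx')
    have hr := Submodule.finrank_sup_add_finrank_inf_eq W W'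
    rwa [hinf, finrank_bot, add_zero, h.finrank_eq, h'.finrank_eq] at hr
  isOpen := h.isOpen.union h'.isOpen
  isBounded := h.isBounded.union h'.isBounded
  adm := by
    intro u hu
    obtain ⟨f, hf, g, hg, rfl⟩ := Submodule.mem_sup.1 hu
    exact ((h.adm f hf).mono Set.subset_union_left).add ((h'.adm g hg).mono Set.subset_union_right)
  integral_le := by
    intro u hu
    obtain ⟨f, hf, g, hg, rfl⟩ := Submodule.mem_sup.1 hu
    have hfa := h.adm f hf
    have hga := h'.adm g hg
    have hdt : Disjoint (tsupport f) (tsupport g) := hd.mono hfa.2.2 hga.2.2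
    have hmul : ∀ F G : EuclideanSpace ℝ (Fin N) → ℝ, Function.support F ⊆ tsupport f →
        Function.support G ⊆ tsupport g → ∀ x, F x * G x = 0 := by
      intro F G hF hG x
      by_contra hx
      exact Set.disjoint_left.1 hdt (hF (left_ne_zero_of_mul hx)) (hG (right_ne_zero_of_mul hx))
    rw [lapN_add hfa.1 hga.1,
      integral_add_sq_of_disjoint (continuous_lapN hfa.1) hfa.hasCompactSupport_lapN
        (continuous_lapN hga.1) hga.hasCompactSupport_lapN
        (hmul _ _ support_lapN_subset support_lapN_subset),
      integral_add_sq_of_disjoint hfa.1.continuous hfa.2.1 hga.1.continuous hga.2.1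
        (hmul _ _ (subset_tsupport f) (subset_tsupport g)), mul_add]
    exact add_le_add (h.integral_le f hf) (h'.integral_le g hg)

lemma exists_homothety (h : IsTrialSpace k Λ W V) {s : ℝ} (hs : 0 < s)
    (b : EuclideanSpace ℝ (Fin N)) :
    ∃ W' : Submodule ℝ (EuclideanSpace ℝ (Fin N) → ℝ),
      IsTrialSpace k (s ^ 4 * Λ) W' ((fun x => s • x + b) ⁻¹' V) := by
  have := h.finiteDimensional
  let φ : EuclideanSpace ℝ (Fin N) ≃ₜ EuclideanSpace ℝ (Fin N) :=
    (Homeomorph.smulOfNeZero s hs.ne').trans (Homeomorph.addRight b)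
  let T := LinearEquiv.funCongrLeft ℝ ℝ φ.toEquiv
  have hT : ∀ u, T u = fun x => u (s • x + b) := fun u => rfl
  refine ⟨W.map (T : _ →ₗ[ℝ] _), inferInstance, ?_, h.isOpen.preimage φ.continuous, ?_, ?_, ?_⟩
  · rw [LinearEquiv.finrank_map_eq, h.finrank_eq]
  · have hV : (fun x => s • x + b) ⁻¹' V ⊆ φ.symm '' closure V := by
      intro x hx
      exact ⟨φ x, subset_closure hx, φ.symm_apply_apply x⟩
    exact ((h.isBounded.isCompact_closure.image φ.symm.continuous).isBounded).subset hV
  · rintro - ⟨u, hu, rfl⟩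
    exact (h.adm u hu).comp_homothety hs.ne' b
  · rintro - ⟨u, hu, rfl⟩
    have h1 : ∫ x, lapN (T u) x ^ 2 = s ^ 4 * ((s ^ N)⁻¹ * ∫ x, lapN u x ^ 2) := by
      rw [hT, lapN_comp_homothety (h.adm u hu).1, ← integral_comp_homothety _ hs b,
        ← integral_const_mul]
      congr with x
      ring
    have h2 : ∫ x, T u x ^ 2 = (s ^ N)⁻¹ * ∫ x, u x ^ 2 := by
      rw [← integral_comp_homothety _ hs b, hT]
    change ∫ x, lapN (T u) x ^ 2 ≤ s ^ 4 * Λ * ∫ x, T u x ^ 2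
    rw [h1, h2]
    calc s ^ 4 * ((s ^ N)⁻¹ * ∫ x, lapN u x ^ 2)
        ≤ s ^ 4 * ((s ^ N)⁻¹ * (Λ * ∫ x, u x ^ 2)) := by
          gcongr
          exact h.integral_le u hu
      _ = s ^ 4 * Λ * ((s ^ N)⁻¹ * ∫ x, u x ^ 2) := by ring

end IsTrialSpace

lemma exists_disjoint_ball {E : Type*} [NormedAddCommGroup E] [NormedSpace ℝ E] [Nontrivial E]
    {V : Set E} (hV : Bornology.IsBounded V) (r : ℝ) :
    ∃ c : E, Disjoint V (Metric.ball c r) := by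
  obtain ⟨R, hR⟩ := hV.subset_closedBall 0
  obtain ⟨c, hc⟩ := exists_norm_eq E (c := max (R + r) 0) (le_max_right _ _)
  refine ⟨c, Set.disjoint_left.2 fun x hx hxc => ?_⟩
  have h1 : ‖x‖ ≤ R := by simpa using hR hx
  have h2 : ‖c - x‖ < r := by rwa [Metric.mem_ball', dist_eq_norm] at hxc
  have h3 := norm_sub_norm_le c x
  have h4 := le_max_left (R + r) 0
  linarith

lemma exists_isOpen_superset_volume_eq_one {N : ℕ} (hN : N ≠ 0)
    {V : Set (EuclideanSpace ℝ (Fin N))} (hV : IsOpen V) (hb : Bornology.IsBounded V)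
    (hv : volume V ≤ 1) : ∃ Ω, IsOpen Ω ∧ volume Ω = 1 ∧ V ⊆ Ω := by
  have : NeZero N := ⟨hN⟩
  set ω := volume (Metric.ball (0 : EuclideanSpace ℝ (Fin N)) 1)
  have hω0 : ω ≠ 0 := (Metric.measure_ball_pos volume _ one_pos).ne'
  have hωt : ω ≠ ⊤ := measure_ball_lt_top.ne
  set q : ℝ := ((1 - volume V) / ω).toReal
  have hq : ENNReal.ofReal q = (1 - volume V) / ω :=
    ENNReal.ofReal_toReal (ENNReal.div_ne_top (by simp) hω0)
  have hq0 : 0 ≤ q := ENNReal.toReal_nonneg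
  obtain ⟨c, hc⟩ := exists_disjoint_ball hb (q ^ ((N : ℝ)⁻¹))
  refine ⟨V ∪ Metric.ball c (q ^ ((N : ℝ)⁻¹)), hV.union Metric.isOpen_ball, ?_,
    Set.subset_union_left⟩
  rw [measure_union hc measurableSet_ball, Measure.addHaar_ball _ _ (by positivity),
    finrank_euclideanSpace_fin, Real.rpow_inv_natCast_pow hq0 hN, hq,
    ENNReal.div_mul_cancel hω0 hωt, add_tsub_cancel_of_le hv]

section Eigenvalues

variable {N k : ℕ} {Ω V : Set (EuclideanSpace ℝ (Fin N))}

lemma sSup_rayleigh_nonneg (u : Fin k → EuclideanSpace ℝ (Fin N) → ℝ) :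
    0 ≤ sSup { r | ∃ c : Fin k → ℝ, c ≠ 0 ∧
      r = (∫ x, (lapN (fun y => ∑ i, c i * u i y) x) ^ 2) / (∫ x, (∑ i, c i * u i x) ^ 2) } := by
  refine Real.sSup_nonneg ?_
  rintro _ ⟨c, -, rfl⟩
  exact div_nonneg (integral_nonneg fun _ => sq_nonneg _) (integral_nonneg fun _ => sq_nonneg _)

lemma lamkN_nonneg (N k : ℕ) (Ω : Set (EuclideanSpace ℝ (Fin N))) : 0 ≤ lamkN N k Ω := by
  refine Real.sInf_nonneg ?_
  rintro _ ⟨u, -, -, rfl⟩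
  exact sSup_rayleigh_nonneg u

lemma lamStar_nonneg (N k : ℕ) : 0 ≤ lamStar N k := by
  refine Real.sInf_nonneg ?_
  rintro _ ⟨Ω, -, -, rfl⟩
  exact lamkN_nonneg N k Ω

lemma IsTrialSpace.lamStar_le (hN : N ≠ 0) {Λ : ℝ}
    {W : Submodule ℝ (EuclideanSpace ℝ (Fin N) → ℝ)} (h : IsTrialSpace k Λ W V) (hΛ : 0 ≤ Λ)
    (hv : volume V ≤ 1) : lamStar N k ≤ Λ := by
  obtain ⟨Ω, hΩ, hΩv, hVΩ⟩ := exists_isOpen_superset_volume_eq_one hN h.isOpen h.isBounded hv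
  have := h.finiteDimensional
  let B := Module.finBasisOfFinrankEq ℝ W h.finrank_eq
  have hstar : lamStar N k ≤ lamkN N k Ω := by
    refine csInf_le ⟨0, ?_⟩ ⟨Ω, hΩ, hΩv, rfl⟩
    rintro _ ⟨Ω, -, -, rfl⟩
    exact lamkN_nonneg N k Ω
  refine hstar.trans ?_
  rw [lamkN]
  refine le_trans (csInf_le ⟨0, ?_⟩ ⟨fun i => (B i : EuclideanSpace ℝ (Fin N) → ℝ),
    fun i => (h.adm _ (B i).2).mono hVΩ, ?_, rfl⟩) ?_
  · rintro _ ⟨u, -, -, rfl⟩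
    exact sSup_rayleigh_nonneg u
  · exact B.linearIndependent.map' W.subtype (Submodule.ker_subtype W)
  · refine Real.sSup_le ?_ hΛ
    rintro _ ⟨c, -, rfl⟩
    refine div_le_of_le_mul₀ (integral_nonneg fun _ => sq_nonneg _) hΛ ?_
    have hmem : (fun y => ∑ i, c i * (B i : EuclideanSpace ℝ (Fin N) → ℝ) y) ∈ W := by
      have hs : ∑ i, c i • (B i : EuclideanSpace ℝ (Fin N) → ℝ) ∈ W :=
        W.sum_mem fun i _ => W.smul_mem _ (B i).2
      convert hs using 1
      ext y
      simp
    exact h.integral_le _ hmem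

lemma integral_sum_mul_sq {f : Fin k → EuclideanSpace ℝ (Fin N) → ℝ}
    (hf : ∀ i, Continuous (f i)) (hfc : ∀ i, HasCompactSupport (f i)) (c : Fin k → ℝ) :
    ∫ x, (∑ i, c i * f i x) ^ 2 = ∑ i, ∑ j, c i * c j * ∫ x, f i x * f j x := by
  have hint : ∀ i j, Integrable (fun x => c i * c j * (f i x * f j x)) := fun i j =>
    (((hf i).mul (hf j)).integrable_of_hasCompactSupport (hfc i).mul_right).const_mul _
  simp_rw [← integral_const_mul]
  rw [← integral_congr_ae (.of_forall fun x => ?_)]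
  rotate_left
  · exact fun x => ∑ i, ∑ j, c i * c j * (f i x * f j x)
  · simp only [sq, Finset.sum_mul_sum]
    exact Finset.sum_congr rfl fun i _ => Finset.sum_congr rfl fun j _ => by ring
  · rw [integral_finsetSum _ fun i _ => integrable_finsetSum _ fun j _ => hint i j]
    exact Finset.sum_congr rfl fun i _ => integral_finsetSum _ fun j _ => hint i j

lemma sum_mul_ne_zero_of_linearIndependent {X : Type*} {u : Fin k → X → ℝ}
    (hu : LinearIndependent ℝ u) {c : Fin k → ℝ} (hc : c ≠ 0) :
    (fun y => ∑ i, c i * u i y) ≠ 0 := by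
  refine fun h0 => hc (funext fun i => Fintype.linearIndependent_iff.1 hu c ?_ i)
  rw [← h0]
  ext y
  simp

lemma bddAbove_rayleigh {u : Fin k → EuclideanSpace ℝ (Fin N) → ℝ} (ha : ∀ i, AdmN Ω (u i))
    (hu : LinearIndependent ℝ u) :
    BddAbove { r | ∃ c : Fin k → ℝ, c ≠ 0 ∧
      r = (∫ x, (lapN (fun y => ∑ i, c i * u i y) x) ^ 2) / (∫ x, (∑ i, c i * u i x) ^ 2) } := by
  set p : (Fin k → ℝ) → ℝ := fun c => ∫ x, (lapN (fun y => ∑ i, c i * u i y) x) ^ 2 with hp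
  set q : (Fin k → ℝ) → ℝ := fun c => ∫ x, (∑ i, c i * u i x) ^ 2 with hq
  have hp' : ∀ c, p c = ∑ i, ∑ j, c i * c j * ∫ x, lapN (u i) x * lapN (u j) x := fun c => by
    simp only [hp, lapN_sum_mul fun i => (ha i).1]
    exact integral_sum_mul_sq (fun i => continuous_lapN (ha i).1)
      (fun i => (ha i).hasCompactSupport_lapN) c
  have hq' : ∀ c, q c = ∑ i, ∑ j, c i * c j * ∫ x, u i x * u j x := fun c =>
    integral_sum_mul_sq (fun i => (ha i).1.continuous) (fun i => (ha i).2.1) c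
  have hpc : Continuous p := by rw [funext hp']; fun_prop
  have hqc : Continuous q := by rw [funext hq']; fun_prop
  have hq0 : ∀ c, c ≠ 0 → 0 < q c := fun c hc =>
    (AdmN.sum_mul ha c).integral_sq_pos (sum_mul_ne_zero_of_linearIndependent hu hc)
  have hps : ∀ (t : ℝ) c, p (t • c) = t ^ 2 * p c := fun t c => by
    simp only [hp', Finset.mul_sum, Pi.smul_apply, smul_eq_mul]
    exact Finset.sum_congr rfl fun i _ => Finset.sum_congr rfl fun j _ => by ring
  have hqs : ∀ (t : ℝ) c, q (t • c) = t ^ 2 * q c := fun t c => by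
    simp only [hq', Finset.mul_sum, Pi.smul_apply, smul_eq_mul]
    exact Finset.sum_congr rfl fun i _ => Finset.sum_congr rfl fun j _ => by ring
  have hcont : ContinuousOn (fun c => p c / q c) (Metric.sphere 0 1) :=
    hpc.continuousOn.div hqc.continuousOn fun c hc =>
      (hq0 c (ne_zero_of_mem_unit_sphere ⟨c, hc⟩)).ne'
  refine ((isCompact_sphere _ _).bddAbove_image hcont).mono ?_
  rintro _ ⟨c, hc, rfl⟩
  have hn : ‖c‖⁻¹ ≠ 0 := inv_ne_zero (norm_ne_zero_iff.2 hc)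
  refine ⟨‖c‖⁻¹ • c, by simp [norm_smul, hc], ?_⟩
  change p (‖c‖⁻¹ • c) / q (‖c‖⁻¹ • c) = p c / q c
  rw [hps, hqs, mul_div_mul_left _ _ (pow_ne_zero 2 hn)]

lemma exists_linearIndependent_adm (hN : N ≠ 0) (k : ℕ) (hΩ : IsOpen Ω) (hv : volume Ω ≠ 0) :
    ∃ u : Fin k → EuclideanSpace ℝ (Fin N) → ℝ, (∀ i, AdmN Ω (u i)) ∧ LinearIndependent ℝ u := by
  have : NeZero N := ⟨hN⟩
  have hinf : Ω.Infinite := fun hfin => hv (hfin.measure_zero volume)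
  let z : Fin k → EuclideanSpace ℝ (Fin N) := fun i => hinf.natEmbedding Ω i
  have hz : Function.Injective z := fun i j hij =>
    Fin.ext ((hinf.natEmbedding Ω).injective (Subtype.ext hij))
  have hnhds : ∀ i, Ω \ (z '' {i}ᶜ) ∈ nhds (z i) := by
    intro i
    refine (hΩ.sdiff (Set.toFinite _).isClosed).mem_nhds ⟨(hinf.natEmbedding Ω i).2, ?_⟩
    rintro ⟨j, hj, hji⟩
    exact hj (hz hji)
  choose u hsub hcs hsm _ hone using fun i =>
    exists_contDiff_tsupport_subset (n := (⊤ : ℕ∞)) (hnhds i)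
  have hzero : ∀ i j, i ≠ j → u i (z j) = 0 := fun i j hij => by
    by_contra h
    exact (hsub i (subset_tsupport _ h)).2 ⟨j, hij.symm, rfl⟩
  refine ⟨u, fun i => ⟨hsm i, hcs i, (hsub i).trans Set.sdiff_subset⟩,
    Fintype.linearIndependent_iff.2 fun c hc j => ?_⟩
  have h := congrFun hc (z j)
  rw [Finset.sum_apply, Finset.sum_eq_single j] at h
  · simpa [hone] using h
  · intro i _ hij
    simp [hzero i j hij]
  · simp

lemma exists_isTrialSpace_lt (hN : N ≠ 0) (k : ℕ) {a : ℝ} (ha : lamStar N k < a) :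
    ∃ W V, IsTrialSpace (N := N) k a W V ∧ volume V ≤ 1 := by
  obtain ⟨Ω₀, hΩ₀, hΩ₀v, -⟩ := exists_isOpen_superset_volume_eq_one hN isOpen_empty
    Bornology.isBounded_empty (by simp)
  rw [lamStar] at ha
  obtain ⟨_, ⟨Ω, hΩ, hv, rfl⟩, hlt⟩ :=
    exists_lt_of_csInf_lt (by exact ⟨_, Ω₀, hΩ₀, hΩ₀v, rfl⟩) ha
  obtain ⟨u₀, hu₀, hu₀l⟩ := exists_linearIndependent_adm hN k hΩ (by simp [hv])
  rw [lamkN] at hlt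
  obtain ⟨_, ⟨u, hu, hul, rfl⟩, hlt⟩ :=
    exists_lt_of_csInf_lt (by exact ⟨_, u₀, hu₀, hu₀l, rfl⟩) hlt
  have hK : IsCompact (⋃ i, tsupport (u i)) := isCompact_iUnion fun i => (hu i).2.1
  obtain ⟨R, hR⟩ := hK.isBounded.subset_ball 0
  have huV : ∀ i, AdmN (Ω ∩ Metric.ball 0 R) (u i) := fun i =>
    ⟨(hu i).1, (hu i).2.1, Set.subset_inter (hu i).2.2 ((Set.subset_iUnion _ i).trans hR)⟩
  have hspan : ∀ f ∈ Submodule.span ℝ (Set.range u), ∃ c : Fin k → ℝ,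
      f = fun y => ∑ i, c i * u i y := by
    intro f hf
    obtain ⟨c, rfl⟩ := (Submodule.mem_span_range_iff_exists_fun ℝ).1 hf
    exact ⟨c, by ext y; simp⟩
  refine ⟨Submodule.span ℝ (Set.range u), Ω ∩ Metric.ball 0 R, ⟨?_, ?_,
    hΩ.inter Metric.isOpen_ball, Metric.isBounded_ball.subset Set.inter_subset_right, ?_, ?_⟩,
    (measure_mono Set.inter_subset_left).trans hv.le⟩
  · exact FiniteDimensional.span_of_finite ℝ (Set.finite_range u)
  · simpa using finrank_span_eq_card hul
  · intro f hf
    obtain ⟨c, rfl⟩ := hspan f hf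
    exact AdmN.sum_mul huV c
  · intro f hf
    obtain ⟨c, rfl⟩ := hspan f hf
    by_cases hc : c = 0
    · rw [lapN_sum_mul (fun i => (hu i).1) c]
      simp [hc]
    · have hpos := (AdmN.sum_mul hu c).integral_sq_pos (sum_mul_ne_zero_of_linearIndependent hul hc)
      refine (div_le_iff₀ hpos).1 (le_trans ?_ hlt.le)
      exact le_csSup (bddAbove_rayleigh hu hul) ⟨c, hc, rfl⟩

lemma lamStar_zero (N : ℕ) : lamStar N 0 = 0 := by
  refine le_antisymm (Real.sInf_nonpos ?_) (lamStar_nonneg N 0)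
  rintro _ ⟨Ω, -, -, rfl⟩
  refine Real.sInf_nonpos ?_
  rintro _ ⟨u, -, -, rfl⟩
  refine Real.sSup_nonpos ?_
  rintro _ ⟨c, hc, -⟩
  exact absurd (Subsingleton.elim c 0) hc

/-- The combined estimate obtained from two disjoint rescaled trial spaces. -/
lemma lamStar_add_le_of_isTrialSpace (hN : N ≠ 0) {k l : ℕ} {a b : ℝ} (ha : 0 < a) (hb : 0 < b)
    {W W' : Submodule ℝ (EuclideanSpace ℝ (Fin N) → ℝ)} {V V' : Set (EuclideanSpace ℝ (Fin N))}
    (h : IsTrialSpace k a W V) (hv : volume V ≤ 1) (h' : IsTrialSpace l b W' V')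
    (hv' : volume V' ≤ 1) :
    lamStar N (k + l) ^ ((N : ℝ) / 4) ≤ a ^ ((N : ℝ) / 4) + b ^ ((N : ℝ) / 4) := by
  have : NeZero N := ⟨hN⟩
  have hN0 : (N : ℝ) ≠ 0 := Nat.cast_ne_zero.2 hN
  set S := a ^ ((N : ℝ) / 4) + b ^ ((N : ℝ) / 4)
  have hS : 0 < S := by positivity
  set M := S ^ (4 / (N : ℝ))
  have hM : 0 < M := by positivity
  have hMS : M ^ ((N : ℝ) / 4) = S := by
    rw [← Real.rpow_mul hS.le, div_mul_div_cancel₀ hN0, div_self four_ne_zero, Real.rpow_one]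
  have scale : ∀ c : ℝ, 0 < c → ∃ s : ℝ, 0 < s ∧ s ^ 4 * c = M ∧
      (s ^ N)⁻¹ = c ^ ((N : ℝ) / 4) / S := by
    intro c hc
    refine ⟨(M / c) ^ (4⁻¹ : ℝ), by positivity, ?_, ?_⟩
    · have := Real.rpow_inv_natCast_pow (n := 4) (div_pos hM hc).le (by norm_num)
      rw [Nat.cast_ofNat] at this
      rw [this, div_mul_cancel₀ _ hc.ne']
    · rw [← Real.rpow_natCast, ← Real.rpow_mul (div_pos hM hc).le,
        show (4⁻¹ : ℝ) * N = N / 4 by ring, Real.div_rpow hM.le hc.le, hMS, inv_div]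
  obtain ⟨s, hs, hsa, hsv⟩ := scale a ha
  obtain ⟨t, ht, htb, htv⟩ := scale b hb
  obtain ⟨X, hX⟩ := h.exists_homothety hs 0
  obtain ⟨R, hR⟩ := (h'.isBounded).subset_ball 0
  obtain ⟨c, hc⟩ := exists_disjoint_ball hX.isBounded (R / t)
  obtain ⟨Y, hY⟩ := h'.exists_homothety ht (-(t • c))
  have hYc : (fun x => t • x + -(t • c)) ⁻¹' V' ⊆ Metric.ball c (R / t) := by
    intro x hx
    have hx' : t • x + -(t • c) ∈ Metric.ball 0 R := hR hx
    rw [mem_ball_zero_iff, ← sub_eq_add_neg, ← smul_sub, norm_smul, Real.norm_of_nonneg ht.le]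
      at hx'
    rwa [Metric.mem_ball, dist_eq_norm, lt_div_iff₀' ht]
  rw [hsa] at hX
  rw [htb] at hY
  have hle := (hX.sup hY (hc.mono_right hYc)).lamStar_le hN hM.le ?_
  · calc lamStar N (k + l) ^ ((N : ℝ) / 4) ≤ M ^ ((N : ℝ) / 4) :=
          Real.rpow_le_rpow (lamStar_nonneg _ _) hle (by positivity)
      _ = S := hMS
  · refine (measure_union_le _ _).trans ?_
    rw [volume_preimage_homothety hs, volume_preimage_homothety ht, hsv, htv]
    calc ENNReal.ofReal (a ^ ((N : ℝ) / 4) / S) * volume V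
          + ENNReal.ofReal (b ^ ((N : ℝ) / 4) / S) * volume V'
        ≤ ENNReal.ofReal (a ^ ((N : ℝ) / 4) / S) * 1
          + ENNReal.ofReal (b ^ ((N : ℝ) / 4) / S) * 1 := by gcongr
      _ = 1 := by
        rw [mul_one, mul_one, ← ENNReal.ofReal_add (by positivity) (by positivity), ← add_div,
          div_self hS.ne', ENNReal.ofReal_one]

lemma lamStar_add_rpow_le (hN : N ≠ 0) (k l : ℕ) :
    lamStar N (k + l) ^ ((N : ℝ) / 4) ≤
      lamStar N k ^ ((N : ℝ) / 4) + lamStar N l ^ ((N : ℝ) / 4) := by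
  have hlim : Tendsto (fun ε : ℝ => (lamStar N k + ε) ^ ((N : ℝ) / 4)
      + (lamStar N l + ε) ^ ((N : ℝ) / 4)) (nhdsWithin 0 (Set.Ioi 0))
      (nhds (lamStar N k ^ ((N : ℝ) / 4) + lamStar N l ^ ((N : ℝ) / 4))) := by
    have hc : Continuous (fun ε : ℝ => (lamStar N k + ε) ^ ((N : ℝ) / 4)
        + (lamStar N l + ε) ^ ((N : ℝ) / 4)) :=
      ((continuous_const.add continuous_id).rpow_const fun _ => .inr (by positivity)).add
        ((continuous_const.add continuous_id).rpow_const fun _ => .inr (by positivity))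
    simpa using (hc.tendsto 0).mono_left nhdsWithin_le_nhds
  refine ge_of_tendsto hlim ?_
  filter_upwards [self_mem_nhdsWithin] with ε hε
  have hε : 0 < ε := hε
  obtain ⟨W, V, h, hv⟩ := exists_isTrialSpace_lt hN k (lt_add_of_pos_right (lamStar N k) hε)
  obtain ⟨W', V', h', hv'⟩ := exists_isTrialSpace_lt hN l (lt_add_of_pos_right (lamStar N l) hε)
  exact lamStar_add_le_of_isTrialSpace hN (add_pos_of_nonneg_of_pos (lamStar_nonneg _ _) hε)
    (add_pos_of_nonneg_of_pos (lamStar_nonneg _ _) hε) h hv h' hv'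

lemma lamStar_sum_rpow_le (hN : N ≠ 0) {ι : Type*} (s : Finset ι) (i : ι → ℕ) :
    lamStar N (∑ j ∈ s, i j) ^ ((N : ℝ) / 4) ≤ ∑ j ∈ s, lamStar N (i j) ^ ((N : ℝ) / 4) := by
  classical
  induction s using Finset.induction_on with
  | empty =>
    have hN0 : (N : ℝ) ≠ 0 := Nat.cast_ne_zero.2 hN
    simp [lamStar_zero, Real.zero_rpow, hN0]
  | insert j s hj ih =>
    rw [Finset.sum_insert hj, Finset.sum_insert hj]
    exact (lamStar_add_rpow_le hN _ _).trans (add_le_add le_rfl ih)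

end Eigenvalues

/-- Subadditivity of minimal Dirichlet biharmonic eigenvalues: if
`i_1 ≤ … ≤ i_p` are positive integers with `i_1 + … + i_p = k`, then
`(λ_k*)^{N/4} ≤ (λ_{i_1}*)^{N/4} + … + (λ_{i_p}*)^{N/4}`; in particular
`(λ_{k+1}*)^{N/4} − (λ_k*)^{N/4} ≤ (λ_1*)^{N/4}`. -/
theorem lamStar_subadditive (N : ℕ) (hN : 2 ≤ N) :
    (∀ (k p : ℕ) (i : Fin p → ℕ), 1 ≤ p → (∀ j, 1 ≤ i j) → Monotone i →
      ∑ j, i j = k →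
      (lamStar N k) ^ ((N : ℝ) / 4) ≤ ∑ j, (lamStar N (i j)) ^ ((N : ℝ) / 4)) ∧
    (∀ k : ℕ, 1 ≤ k →
      (lamStar N (k + 1)) ^ ((N : ℝ) / 4) - (lamStar N k) ^ ((N : ℝ) / 4) ≤
        (lamStar N 1) ^ ((N : ℝ) / 4)) := by
  have hN0 : N ≠ 0 := by omega
  refine ⟨fun k p i _ _ _ hk => hk ▸ lamStar_sum_rpow_le hN0 Finset.univ i, fun k _ => ?_⟩
  exact sub_le_iff_le_add'.2 (lamStar_add_rpow_le hN0 k 1)
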